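/- Let n be a positive integer, let 𝒜 be a finite family of subsets of {1,…,n} such that every S ∈ 𝒜 is an interval (a set of consecutive integers), and fix f > 0. Define v^agg : [0,1]^n → ℝ by v^agg(x) = max{ f·y : y ∈ [0,1], ∑_{j∈S} x_j ≥ y for every S ∈ 𝒜 }, and let g : [0,1]^n → ℝ be the concavification of the restriction of v^agg to {0,1}^n, i.e., g(x) = max{ ∑_{β∈{0,1}^n} α_β v^agg(β) : α_β ≥ 0, ∑_β α_β = 1, ∑_β α_β β = x }. Then g(x) = v^agg(x) for every x ∈ [0,1]^n. -/

import Mathlib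

/-- The real vector in `{0,1}^n` associated with a Boolean vector `β`. -/
def toVec {n : ℕ} (β : Fin n → Bool) : Fin n → ℝ := fun i => if β i then 1 else 0

/-- The concavification of `h : {0,1}^n → ℝ`:
`g(x) = max{ ∑_β α_β h(β) : α ≥ 0, ∑_β α_β = 1, ∑_β α_β β = x }`. -/
noncomputable def concavify (n : ℕ) (h : (Fin n → Bool) → ℝ) (x : Fin n → ℝ) : ℝ :=
  sSup {t | ∃ α : (Fin n → Bool) → ℝ,
    (∀ β, 0 ≤ α β) ∧ (∑ β, α β) = 1 ∧
    (∀ i, (∑ β, α β * toVec β i) = x i) ∧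
    t = ∑ β, α β * h β}

/-- `v^agg(x) = max{ f·y : y ∈ [0,1], ∑_{j∈S} x_j ≥ y for every S ∈ 𝒜 }`. -/
noncomputable def vagg {N : Type*} (A : Finset (Finset N)) (f : ℝ) (x : N → ℝ) : ℝ :=
  sSup {t | ∃ y : ℝ, y ∈ Set.Icc (0 : ℝ) 1 ∧
    (∀ S ∈ A, y ≤ ∑ j ∈ S, x j) ∧ t = f * y}

open MeasureTheory

/-- The maximum defining `vagg` is attained at every nonnegative point. -/
lemma exists_vagg_eq {N : Type*} (A : Finset (Finset N)) (f : ℝ) {x : N → ℝ}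
    (hx : ∀ i, 0 ≤ x i) :
    ∃ y ∈ Set.Icc (0 : ℝ) 1, (∀ S ∈ A, y ≤ ∑ j ∈ S, x j) ∧ vagg A f x = f * y := by
  let K : Set ℝ := Set.Icc 0 1 ∩ ⋂ S ∈ A, Set.Iic (∑ j ∈ S, x j)
  have hK : IsCompact K :=
    isCompact_Icc.inter_right (isClosed_biInter fun S _ => isClosed_Iic)
  have hKne : K.Nonempty :=
    ⟨0, by simp, by simpa using fun S _ => Finset.sum_nonneg fun j _ => hx j⟩
  have hset : {t | ∃ y : ℝ, y ∈ Set.Icc (0 : ℝ) 1 ∧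
      (∀ S ∈ A, y ≤ ∑ j ∈ S, x j) ∧ t = f * y} = (fun y => f * y) '' K := by
    ext t
    simp [K, and_assoc, eq_comm]
  have hmem : vagg A f x ∈ (fun y => f * y) '' K := by
    rw [vagg, hset]
    exact (hK.image (by fun_prop)).sSup_mem (hKne.image _)
  rw [← hset] at hmem
  exact hmem

/-- Every feasible value is a lower bound for `vagg`. -/
lemma mul_le_vagg {N : Type*} (A : Finset (Finset N)) {f : ℝ} (hf : 0 < f) {x : N → ℝ} {y : ℝ}
    (hy : y ∈ Set.Icc (0 : ℝ) 1) (hyS : ∀ S ∈ A, y ≤ ∑ j ∈ S, x j) : f * y ≤ vagg A f x := by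
  refine le_csSup ⟨f, ?_⟩ ⟨y, hy, hyS, rfl⟩
  rintro _ ⟨z, hz, -, rfl⟩
  exact mul_le_of_le_one_right hf.le hz.2

lemma toVec_mem_Icc {n : ℕ} (β : Fin n → Bool) (i : Fin n) : toVec β i ∈ Set.Icc (0 : ℝ) 1 := by
  unfold toVec
  split_ifs <;> simp

/-- `vagg` dominates every convex combination of its binary values. -/
lemma sum_mul_vagg_toVec_le {n : ℕ} (A : Finset (Finset (Fin n))) {f : ℝ} (hf : 0 < f)
    {x : Fin n → ℝ} {α : (Fin n → Bool) → ℝ} (hα : ∀ β, 0 ≤ α β) (hα1 : ∑ β, α β = 1)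
    (hαx : ∀ i, ∑ β, α β * toVec β i = x i) :
    ∑ β, α β * vagg A f (toVec β) ≤ vagg A f x := by
  choose y hy hyS hyv using fun β : Fin n → Bool =>
    exists_vagg_eq A f (x := toVec β) fun i => (toVec_mem_Icc β i).1
  have hsum : ∑ β, α β * vagg A f (toVec β) = f * ∑ β, α β * y β := by
    rw [Finset.mul_sum]
    exact Finset.sum_congr rfl fun β _ => by rw [hyv]; ring
  rw [hsum]
  refine mul_le_vagg A hf
    ⟨Finset.sum_nonneg fun β _ => mul_nonneg (hα β) (hy β).1, ?_⟩ fun S hS => ?_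
  · rw [← hα1]
    exact Finset.sum_le_sum fun β _ => mul_le_of_le_one_right (hα β) (hy β).2
  · calc ∑ β, α β * y β ≤ ∑ β, α β * ∑ j ∈ S, toVec β j :=
          Finset.sum_le_sum fun β _ => mul_le_mul_of_nonneg_left (hyS β S hS) (hα β)
      _ = ∑ j ∈ S, x j := by
          simp_rw [Finset.mul_sum, ← hαx]
          exact Finset.sum_comm

/-- The points having a translate by an integer multiple of `y` in `(a, b]`. -/
def periodicIoc (y a b : ℝ) : Set ℝ := {θ | ∃ k : ℤ, θ + k * y ∈ Set.Ioc a b}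

lemma measurableSet_periodicIoc (y a b : ℝ) : MeasurableSet (periodicIoc y a b) := by
  have h : periodicIoc y a b = ⋃ k : ℤ, (fun θ : ℝ => θ + k * y) ⁻¹' Set.Ioc a b := by
    ext
    simp only [periodicIoc, Set.mem_iUnion, Set.mem_preimage, Set.mem_ofPred_eq]
  rw [h]
  exact MeasurableSet.iUnion fun k => (measurable_add_const _) measurableSet_Ioc

/-- Over one period, `periodicIoc y a b` has measure `min (b - a) y`. -/
lemma volume_periodicIoc_inter {y a b : ℝ} (hy : 0 ≤ y) (hab : a ≤ b) :
    volume (periodicIoc y a b ∩ Set.Ioc 0 y) = ENNReal.ofReal (min (b - a) y) := by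
  rcases hy.eq_or_lt with rfl | hy
  · simp [hab]
  have hinv : ∀ g : AddSubgroup.zmultiples y,
      (fun θ => g +ᵥ θ) ⁻¹' periodicIoc y a b = periodicIoc y a b := by
    rintro ⟨_, m, rfl⟩
    ext θ
    simp only [periodicIoc, Set.mem_preimage, Set.mem_ofPred_eq, AddSubgroup.vadd_def,
      vadd_eq_add, zsmul_eq_mul]
    constructor
    · rintro ⟨k, hk⟩
      refine ⟨k + m, ?_⟩
      convert hk using 1
      push_cast
      ring
    · rintro ⟨k, hk⟩
      refine ⟨k - m, ?_⟩
      convert hk using 1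
      push_cast
      ring
  have hshift := (isAddFundamentalDomain_Ioc hy 0).measure_set_eq
    (isAddFundamentalDomain_Ioc hy a) (measurableSet_periodicIoc y a b) hinv
  rw [zero_add] at hshift
  have hinter : periodicIoc y a b ∩ Set.Ioc a (a + y) = Set.Ioc a (min b (a + y)) := by
    ext θ
    simp only [periodicIoc, Set.mem_inter_iff, Set.mem_ofPred_eq, Set.mem_Ioc, le_min_iff]
    constructor
    · rintro ⟨⟨k, hk1, hk2⟩, h1, h2⟩
      refine ⟨h1, ?_, h2⟩
      have hk : (-1 : ℝ) < k := by
        by_contra! hk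
        nlinarith
      have hk' : (0 : ℝ) ≤ k := by
        have : (-1 : ℤ) < k := by exact_mod_cast hk
        exact_mod_cast (by omega : (0 : ℤ) ≤ k)
      nlinarith
    · rintro ⟨h1, h2, h3⟩
      exact ⟨⟨0, by simpa using ⟨h1, h2⟩⟩, h1, h3⟩
  rw [hshift, hinter, Real.volume_Ioc, ← min_sub_sub_right, add_sub_cancel_left]

/-- The sum of the coordinates of `x` with index below `m`. -/
def prefixSum {n : ℕ} (x : Fin n → ℝ) (m : ℕ) : ℝ := ∑ j : Fin n with j.val < m, x j

lemma prefixSum_succ {n : ℕ} (x : Fin n → ℝ) (i : Fin n) :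
    prefixSum x (i + 1) = prefixSum x i + x i := by
  have h : Finset.univ.filter (fun j : Fin n => j.val < i + 1)
      = insert i (Finset.univ.filter fun j : Fin n => j.val < i) := by
    ext j
    simp only [Finset.mem_filter, Finset.mem_univ, true_and, Finset.mem_insert, Fin.ext_iff]
    omega
  rw [prefixSum, h, Finset.sum_insert (by simp), add_comm, prefixSum]

lemma prefixSum_mono {n : ℕ} {x : Fin n → ℝ} (hx : ∀ i, 0 ≤ x i) : Monotone (prefixSum x) := by
  intro a b hab
  refine Finset.sum_le_sum_of_subset_of_nonneg (fun j => ?_) fun j _ _ => hx j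
  simp only [Finset.mem_filter, Finset.mem_univ, true_and]
  omega

lemma prefixSum_add_sum_Icc {n : ℕ} (x : Fin n → ℝ) {l u : Fin n} (hlu : l ≤ u) :
    prefixSum x l + ∑ j ∈ Finset.Icc l u, x j = prefixSum x (u + 1) := by
  rw [prefixSum, prefixSum, ← Finset.sum_union]
  · congr 1
    ext j
    simp only [Finset.mem_filter, Finset.mem_univ, true_and, Finset.mem_union, Finset.mem_Icc,
      Fin.le_def] at *
    omega
  · rw [Finset.disjoint_left]
    intro j
    simp only [Finset.mem_filter, Finset.mem_univ, true_and, Finset.mem_Icc, Fin.le_def]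
    omega

/-- If the interval `S` carries `x`-weight at least `y > 0`, then every `θ` has a translate by a
multiple of `y` lying in the segment of some coordinate in `S`. -/
lemma exists_mem_periodicIoc {n : ℕ} {x : Fin n → ℝ} (hx : ∀ i, 0 ≤ x i) {S : Finset (Fin n)}
    (hS : ∀ a ∈ S, ∀ b ∈ S, ∀ c : Fin n, a ≤ c → c ≤ b → c ∈ S) {y : ℝ} (hy : 0 < y)
    (hyS : y ≤ ∑ j ∈ S, x j) (θ : ℝ) :
    ∃ i ∈ S, θ ∈ periodicIoc y (prefixSum x i) (prefixSum x (i + 1)) := by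
  have hne : S.Nonempty := by
    rw [Finset.nonempty_iff_ne_empty]
    rintro rfl
    simp at hyS
    linarith
  obtain ⟨l, u, hlu, rfl⟩ : ∃ l u, l ≤ u ∧ S = Finset.Icc l u := by
    refine ⟨S.min' hne, S.max' hne, S.min'_le_max' hne, ?_⟩
    ext j
    rw [Finset.mem_Icc]
    exact ⟨fun hj => ⟨S.min'_le j hj, S.le_max' j hj⟩,
      fun hj => hS _ (S.min'_mem _) _ (S.max'_mem _) j hj.1 hj.2⟩
  obtain ⟨k, ⟨hk1, hk2⟩, -⟩ := existsUnique_add_zsmul_mem_Ioc hy θ (prefixSum x l)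
  rw [zsmul_eq_mul] at hk1 hk2
  have hend : θ + k * y ≤ prefixSum x (u + 1) := by
    rw [← prefixSum_add_sum_Icc x hlu]
    linarith
  classical
  have hex : ∃ m, θ + k * y ≤ prefixSum x m := ⟨_, hend⟩
  obtain ⟨m, hm, hmin⟩ : ∃ m, θ + k * y ≤ prefixSum x m ∧ ∀ p < m, prefixSum x p < θ + k * y :=
    ⟨Nat.find hex, Nat.find_spec hex, fun p hp => not_le.mp (Nat.find_min hex hp)⟩
  have hlm : l.val < m := by
    by_contra! h
    exact absurd (hm.trans (prefixSum_mono hx h)) (not_le.mpr hk1)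
  have hmu : m ≤ u + 1 := by
    by_contra! h
    exact absurd hend (not_le.mpr (hmin _ h))
  obtain ⟨i, rfl⟩ : ∃ i, m = i + 1 := ⟨m - 1, by omega⟩
  refine ⟨⟨i, by omega⟩, ?_, k, hmin i (by omega), hm⟩
  rw [Finset.mem_Icc, Fin.le_def, Fin.le_def]
  exact ⟨by simp; omega, by simp; omega⟩

/-- The values of `θ ∈ (0, 1]` at which the coordinate `i` is rounded up: systematic sampling with
period `y` for `θ ≤ y`, and the threshold rule `θ ≤ x i` for `θ > y`. -/
def roundUpSet {n : ℕ} (x : Fin n → ℝ) (y : ℝ) (i : Fin n) : Set ℝ :=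
  (periodicIoc y (prefixSum x i) (prefixSum x (i + 1)) ∩ Set.Ioc 0 y) ∪ Set.Ioc y (x i)

lemma measurableSet_roundUpSet {n : ℕ} (x : Fin n → ℝ) (y : ℝ) (i : Fin n) :
    MeasurableSet (roundUpSet x y i) :=
  ((measurableSet_periodicIoc _ _ _).inter measurableSet_Ioc).union measurableSet_Ioc

lemma volume_roundUpSet {n : ℕ} {x : Fin n → ℝ} {y : ℝ} (hy : 0 ≤ y) {i : Fin n}
    (hxi : 0 ≤ x i) : volume (roundUpSet x y i) = ENNReal.ofReal (x i) := by
  have hP := prefixSum_succ x i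
  rw [roundUpSet, measure_union _ measurableSet_Ioc, volume_periodicIoc_inter hy (by linarith),
    Real.volume_Ioc, hP, add_sub_cancel_left]
  · rcases le_total (x i) y with h | h
    · rw [min_eq_left h, ENNReal.ofReal_of_nonpos (sub_nonpos.mpr h), add_zero]
    · rw [min_eq_right h, ← ENNReal.ofReal_add hy (sub_nonneg.mpr h), add_sub_cancel]
  · rw [Set.disjoint_left]
    exact fun θ h1 h2 => not_lt.mpr h1.2.2 h2.1

lemma roundUpSet_subset {n : ℕ} {x : Fin n → ℝ} {y : ℝ} (hy : y ∈ Set.Icc (0 : ℝ) 1) {i : Fin n}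
    (hxi : x i ≤ 1) : roundUpSet x y i ⊆ Set.Ioc 0 1 := by
  rintro θ (h | h)
  · exact ⟨h.2.1, h.2.2.trans hy.2⟩
  · exact ⟨hy.1.trans_lt h.1, h.2.trans hxi⟩

/-- Any point of the cube is a convex combination of binary points in which the binary points
meeting every interval of `A` have total weight at least `y`, provided every interval of `A` has
`x`-weight at least `y`. -/
lemma exists_convexCombination_ge {n : ℕ} {A : Finset (Finset (Fin n))}
    (hA : ∀ S ∈ A, ∀ a ∈ S, ∀ b ∈ S, ∀ c : Fin n, a ≤ c → c ≤ b → c ∈ S)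
    {x : Fin n → ℝ} (hx : ∀ i, x i ∈ Set.Icc (0 : ℝ) 1) {y : ℝ} (hy : y ∈ Set.Icc (0 : ℝ) 1)
    (hyS : ∀ S ∈ A, y ≤ ∑ j ∈ S, x j) :
    ∃ α : (Fin n → Bool) → ℝ, (∀ β, 0 ≤ α β) ∧ ∑ β, α β = 1 ∧
      (∀ i, ∑ β, α β * toVec β i = x i) ∧
      y ≤ ∑ β with ∀ S ∈ A, ∃ i ∈ S, β i = true, α β := by
  classical
  let B : ℝ → Fin n → Bool := fun θ i => decide (θ ∈ roundUpSet x y i)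
  have hB : Measurable B := measurable_pi_iff.mpr fun i =>
    measurable_to_bool (by
      convert measurableSet_roundUpSet x y i using 1
      ext θ
      simp [B])
  let μ : Measure ℝ := volume.restrict (Set.Ioc 0 1)
  have hsum : ∀ s : Finset (Fin n → Bool),
      ∑ β ∈ s, μ.real (B ⁻¹' {β}) = μ.real (B ⁻¹' (s : Set (Fin n → Bool))) := fun s =>
    sum_measureReal_preimage_singleton s fun β _ => hB (measurableSet_singleton β)
  refine ⟨fun β => μ.real (B ⁻¹' {β}), fun β => measureReal_nonneg, ?_, fun i => ?_, ?_⟩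
  · rw [hsum]
    simp [μ, Measure.real]
  · have hpre : B ⁻¹' ((Finset.univ.filter fun β : Fin n → Bool => β i = true :
        Finset (Fin n → Bool)) : Set (Fin n → Bool)) = roundUpSet x y i := by
      ext θ
      simp [B]
    simp only [toVec, mul_ite, mul_one, mul_zero]
    rw [← Finset.sum_filter, hsum, hpre, Measure.real,
      Measure.restrict_apply (measurableSet_roundUpSet x y i),
      Set.inter_eq_left.mpr (roundUpSet_subset hy (hx i).2), volume_roundUpSet hy.1 (hx i).1,
      ENNReal.toReal_ofReal (hx i).1]
  · rw [hsum]
    have hμ : μ.real (Set.Ioc 0 y) = y := by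
      rw [Measure.real, Measure.restrict_apply measurableSet_Ioc,
        Set.inter_eq_left.mpr (Set.Ioc_subset_Ioc_right hy.2), Real.volume_Ioc, sub_zero,
        ENNReal.toReal_ofReal hy.1]
    refine hμ.symm.le.trans (measureReal_mono fun θ hθ => ?_)
    simp only [Finset.coe_filter, Finset.mem_univ, true_and, Set.mem_preimage, Set.mem_ofPred_eq]
    intro S hS
    obtain ⟨i, hi, hθi⟩ := exists_mem_periodicIoc (fun i => (hx i).1) (hA S hS)
      (hθ.1.trans_le hθ.2) (hyS S hS) θ
    exact ⟨i, hi, decide_eq_true (Or.inl ⟨hθi, hθ⟩)⟩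

lemma vagg_toVec_nonneg {n : ℕ} (A : Finset (Finset (Fin n))) {f : ℝ} (hf : 0 < f)
    (β : Fin n → Bool) : 0 ≤ vagg A f (toVec β) := by
  simpa using mul_le_vagg A hf (x := toVec β) (y := 0) (by simp)
    fun S _ => Finset.sum_nonneg fun j _ => (toVec_mem_Icc β j).1

lemma le_vagg_toVec {n : ℕ} {A : Finset (Finset (Fin n))} {f : ℝ} (hf : 0 < f)
    {β : Fin n → Bool} (hβ : ∀ S ∈ A, ∃ i ∈ S, β i = true) : f ≤ vagg A f (toVec β) := by
  simpa using mul_le_vagg A hf (x := toVec β) (y := 1) (by simp) fun S hS => by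
    obtain ⟨i, hi, hβi⟩ := hβ S hS
    calc (1 : ℝ) = toVec β i := by simp [toVec, hβi]
      _ ≤ ∑ j ∈ S, toVec β j :=
        Finset.single_le_sum (fun j _ => (toVec_mem_Icc β j).1) hi

/-- Proposition 3(iii) of the paper.
If every set of the family `𝒜` of subsets of `{1,…,n}` (modelled as `Fin n`) is an
interval (a set of consecutive integers), then the concavification of the restriction
of `v^agg` to `{0,1}^n` equals `v^agg` on all of `[0,1]^n`. -/
theorem stmt_11 (n : ℕ) (hn : 0 < n) (A : Finset (Finset (Fin n)))
    (hA : ∀ S ∈ A, ∀ a ∈ S, ∀ b ∈ S, ∀ c : Fin n, a ≤ c → c ≤ b → c ∈ S)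
    (f : ℝ) (hf : 0 < f)
    (x : Fin n → ℝ) (hx : ∀ i, x i ∈ Set.Icc (0 : ℝ) 1) :
    concavify n (fun β => vagg A f (toVec β)) x = vagg A f x := by
  obtain ⟨y, hy, hyS, hyv⟩ := exists_vagg_eq A f fun i => (hx i).1
  obtain ⟨α, hα, hα1, hαx, hαy⟩ := exists_convexCombination_ge hA hx hy hyS
  have hub : ∀ t ∈ {t | ∃ α : (Fin n → Bool) → ℝ, (∀ β, 0 ≤ α β) ∧ (∑ β, α β) = 1 ∧
      (∀ i, (∑ β, α β * toVec β i) = x i) ∧ t = ∑ β, α β * vagg A f (toVec β)},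
      t ≤ vagg A f x := by
    rintro _ ⟨α, hα, hα1, hαx, rfl⟩
    exact sum_mul_vagg_toVec_le A hf hα hα1 hαx
  refine le_antisymm (csSup_le ⟨_, α, hα, hα1, hαx, rfl⟩ hub)
    (le_csSup_of_le ⟨_, hub⟩ ⟨α, hα, hα1, hαx, rfl⟩ ?_)
  calc vagg A f x = f * y := hyv
    _ ≤ f * ∑ β with ∀ S ∈ A, ∃ i ∈ S, β i = true, α β := mul_le_mul_of_nonneg_left hαy hf.le
    _ = ∑ β with ∀ S ∈ A, ∃ i ∈ S, β i = true, α β * f := by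
        rw [Finset.mul_sum]
        exact Finset.sum_congr rfl fun β _ => mul_comm _ _
    _ ≤ ∑ β with ∀ S ∈ A, ∃ i ∈ S, β i = true, α β * vagg A f (toVec β) :=
        Finset.sum_le_sum fun β hβ => mul_le_mul_of_nonneg_left
          (le_vagg_toVec hf (Finset.mem_filter.mp hβ).2) (hα β)
    _ ≤ ∑ β, α β * vagg A f (toVec β) :=
        Finset.sum_le_sum_of_subset_of_nonneg (Finset.filter_subset _ _) fun β _ _ =>
          mul_nonneg (hα β) (vagg_toVec_nonneg A hf β)
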